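/- Let Σ ⊆ ℂ be open, H ≠ 0 a real constant, u : Σ → ℝ and Q : Σ → ℂ smooth, and let F̂ : Σ × (ℂ\{0}) → SL(2,ℂ) be smooth in z, holomorphic in λ, with F̂(z,λ) ∈ SU(2) for |λ| = 1, satisfying F̂⁻¹ ∂_z F̂ = Û(λ) and F̂⁻¹ ∂_{z̄} F̂ = V̂(λ), where Û(λ) = (1/2)[[u_z, -2H e^u λ⁻¹],[Q e^{-u} λ⁻¹, -u_z]] and V̂(λ) = (1/2)[[-u_{z̄}, -Q̄ e^{-u} λ],[2H e^u λ, u_{z̄}]]. Then for every λ₀ with |λ₀| = 1, the map f^{λ₀}(z) := S_{λ₀}(F̂(z,·)) is a conformal immersion Σ → su(2) with conformal factor e^u, constant mean curvature H, and Hopf differential coefficient λ₀⁻² Q. -/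

import Mathlib

open Matrix Complex

noncomputable section

attribute [local instance] Matrix.linftyOpNormedAddCommGroup Matrix.linftyOpNormedSpace
  Matrix.linftyOpNormedRing Matrix.linftyOpNormedAlgebra

/-- The space of 2×2 complex matrices. -/
abbrev M2 : Type := Matrix (Fin 2) (Fin 2) ℂ

/-- Basis vector `e₁` of su(2). -/
def e1 : M2 := !![0, -Complex.I; -Complex.I, 0]

/-- Basis vector `e₂` of su(2). -/
def e2 : M2 := !![0, 1; -1, 0]

/-- Basis vector `e₃` of su(2). -/
def e3 : M2 := !![Complex.I, 0; 0, -Complex.I]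

/-- The inner product `⟨X,Y⟩ = -(1/2) tr (XY)` identifying su(2) with E³. -/
def ip (X Y : M2) : ℂ := -(1/2 : ℂ) * (X * Y).trace

/-- Partial derivative in the `x`-direction. -/
def px (f : ℂ → M2) (z : ℂ) : M2 := fderiv ℝ f z 1

/-- Partial derivative in the `y`-direction. -/
def py (f : ℂ → M2) (z : ℂ) : M2 := fderiv ℝ f z Complex.I

/-- Wirtinger derivative `∂_z = (1/2)(∂_x - i ∂_y)`. -/
def dz (f : ℂ → M2) (z : ℂ) : M2 := (2:ℂ)⁻¹ • (px f z - Complex.I • py f z)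

/-- Wirtinger derivative `∂_z̄ = (1/2)(∂_x + i ∂_y)`. -/
def dzb (f : ℂ → M2) (z : ℂ) : M2 := (2:ℂ)⁻¹ • (px f z + Complex.I • py f z)

/-- `x`-derivative of a real-valued function on ℂ. -/
def pxR (u : ℂ → ℝ) (z : ℂ) : ℝ := fderiv ℝ u z 1

/-- `y`-derivative of a real-valued function on ℂ. -/
def pyR (u : ℂ → ℝ) (z : ℂ) : ℝ := fderiv ℝ u z Complex.I

/-- Wirtinger derivative `u_z` of a real-valued function. -/
def dzR (u : ℂ → ℝ) (z : ℂ) : ℂ := (2:ℂ)⁻¹ * ((pxR u z : ℂ) - Complex.I * (pyR u z : ℂ))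

/-- Wirtinger derivative `u_z̄` of a real-valued function. -/
def dzbR (u : ℂ → ℝ) (z : ℂ) : ℂ := (2:ℂ)⁻¹ * ((pxR u z : ℂ) + Complex.I * (pyR u z : ℂ))

/-- `x`-derivative of a complex-valued function on ℂ. -/
def pxC (q : ℂ → ℂ) (z : ℂ) : ℂ := fderiv ℝ q z 1

/-- `y`-derivative of a complex-valued function on ℂ. -/
def pyC (q : ℂ → ℂ) (z : ℂ) : ℂ := fderiv ℝ q z Complex.I

/-- Wirtinger derivative `∂_z` of a complex-valued function. -/
def dzC (q : ℂ → ℂ) (z : ℂ) : ℂ := (2:ℂ)⁻¹ * (pxC q z - Complex.I * pyC q z)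

/-- Wirtinger derivative `∂_z̄` of a complex-valued function. -/
def dzbC (q : ℂ → ℂ) (z : ℂ) : ℂ := (2:ℂ)⁻¹ * (pxC q z + Complex.I * pyC q z)

/-- The Sym–Bobenko formula `S_{λ₀}(G) = -(1/(2H)) (G e₃ G⁻¹ + 2iλ ∂_λ G · G⁻¹)` at `λ = λ₀`. -/
def symB (H : ℝ) (G : ℂ → M2) (l : ℂ) : M2 :=
  (-(2 * (H : ℂ))⁻¹) • (G l * e3 * (G l)⁻¹ + (2 * Complex.I * l) • (fderiv ℂ G l 1 * (G l)⁻¹))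

open Topology in
/-- The adjugate of a 2×2 matrix as a continuous real-linear map. -/
def adjL : M2 →L[ℝ] M2 :=
  LinearMap.toContinuousLinearMap
    { toFun := fun M => (!![M 1 1, -M 0 1; -M 1 0, M 0 0] : M2)
      map_add' := by
        intro M N
        ext i j
        fin_cases i <;> fin_cases j <;> simp <;> ring
      map_smul' := by
        intro c M
        ext i j
        fin_cases i <;> fin_cases j <;> simp }

lemma adjL_apply (M : M2) : adjL M = !![M 1 1, -M 0 1; -M 1 0, M 0 0] := rfl

lemma inv_eq_adjL {M : M2} (h : M.det = 1) : M⁻¹ = adjL M := by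
  rw [Matrix.inv_def, h, adjL_apply, Matrix.adjugate_fin_two]
  simp

lemma mul_inv_one {M : M2} (h : M.det = 1) : M * M⁻¹ = 1 :=
  Matrix.mul_nonsing_inv M (by simp [h])

lemma inv_mul_one' {M : M2} (h : M.det = 1) : M⁻¹ * M = 1 :=
  Matrix.nonsing_inv_mul M (by simp [h])

lemma fderiv_mul_apply_gen {E : Type*} [NormedRing E] [NormedAlgebra ℝ E] {A B : ℂ → E} {z : ℂ}
    (v : ℂ) (hA : DifferentiableAt ℝ A z)
    (hB : DifferentiableAt ℝ B z) :
    fderiv ℝ (fun w => A w * B w) z v = fderiv ℝ A z v * B z + A z * fderiv ℝ B z v := by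
  have := (hA.hasFDerivAt.mul' hB.hasFDerivAt).fderiv
  have h2 := congrArg (fun T => T v) this
  refine (show _ = _ from h2).trans ?_
  simp [add_comm]

lemma fderiv_mul_apply {A B : ℂ → M2} {z : ℂ} (v : ℂ) (hA : DifferentiableAt ℝ A z)
    (hB : DifferentiableAt ℝ B z) :
    fderiv ℝ (fun w => A w * B w) z v = fderiv ℝ A z v * B z + A z * fderiv ℝ B z v :=
  fderiv_mul_apply_gen v hA hB

open Topology in
lemma diff_inv {F : ℂ → M2} {z : ℂ} (hF : DifferentiableAt ℝ F z)
    (hdet : ∀ᶠ w in 𝓝 z, (F w).det = 1) : DifferentiableAt ℝ (fun w => (F w)⁻¹) z := by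
  have h : (fun w => (F w)⁻¹) =ᶠ[𝓝 z] fun w => adjL (F w) := by
    filter_upwards [hdet] with w hw using inv_eq_adjL hw
  exact (adjL.differentiableAt.comp z hF).congr_of_eventuallyEq h

open Topology in
lemma fderiv_minv {F : ℂ → M2} {z v : ℂ} {W : M2} (hF : DifferentiableAt ℝ F z)
    (hdet : ∀ᶠ w in 𝓝 z, (F w).det = 1) (hW : fderiv ℝ F z v = F z * W) :
    fderiv ℝ (fun w => (F w)⁻¹) z v = - (W * (F z)⁻¹) := by
  have h1 := fderiv_mul_apply v (diff_inv hF hdet) hF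
  have h2 : (fun w => (F w)⁻¹ * F w) =ᶠ[𝓝 z] fun _ => (1 : M2) := by
    filter_upwards [hdet] with w hw using inv_mul_one' hw
  rw [h2.fderiv_eq] at h1
  simp only [fderiv_fun_const, Pi.zero_apply, _root_.zero_apply] at h1
  have hd := hdet.self_of_nhds
  rw [hW, ← mul_assoc, inv_mul_one' hd, one_mul] at h1
  have h3 := congrArg (· * (F z)⁻¹) h1
  simp only [zero_mul, add_mul, mul_assoc, mul_inv_one hd, mul_one] at h3
  exact eq_neg_of_add_eq_zero_left h3.symm

open Topology in
lemma conj_deriv {F A : ℂ → M2} {z v : ℂ} {W : M2} (hF : DifferentiableAt ℝ F z)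
    (hA : DifferentiableAt ℝ A z)
    (hdet : ∀ᶠ w in 𝓝 z, (F w).det = 1) (hW : fderiv ℝ F z v = F z * W) :
    fderiv ℝ (fun w => F w * A w * (F w)⁻¹) z v
      = F z * (W * A z - A z * W + fderiv ℝ A z v) * (F z)⁻¹ := by
  rw [fderiv_mul_apply (A := fun w => F w * A w) v (hF.mul hA) (diff_inv hF hdet), fderiv_mul_apply v hF hA,
    fderiv_minv hF hdet hW, hW]
  noncomm_ring

open Topology in
/-- Symmetry of mixed derivatives in the form we need. -/
lemma mixed_gen {E : Type*} [NormedRing E] [NormedAlgebra ℝ E] [NormedAlgebra ℂ E]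
    [IsScalarTower ℝ ℂ E] {Fh : ℂ → ℂ → E} {S : Set ℂ} (hS : IsOpen S)
    (hsm : ContDiffOn ℝ (⊤ : ℕ∞) (fun p : ℂ × ℂ => Fh p.1 p.2) (S ×ˢ {l : ℂ | l ≠ 0}))
    (hhol : ∀ z ∈ S, DifferentiableOn ℂ (Fh z) {l : ℂ | l ≠ 0})
    {l₀ : ℂ} (hl : l₀ ≠ 0) :
    ContDiffOn ℝ (⊤ : ℕ∞) (fun z => fderiv ℂ (Fh z) l₀ 1) S ∧
    ContDiffOn ℝ (⊤ : ℕ∞) (fun z => Fh z l₀) S ∧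
    ∀ z ∈ S, ∀ (v : ℂ) (W : ℂ → E) (W' : E), HasDerivAt W W' l₀ →
      (∀ l, l ≠ 0 → fderiv ℝ (fun w => Fh w l) z v = Fh z l * W l) →
      fderiv ℝ (fun w => fderiv ℂ (Fh w) l₀ 1) z v
        = fderiv ℂ (Fh z) l₀ 1 * W l₀ + Fh z l₀ * W' := by
  set g : ℂ × ℂ → E := fun p => Fh p.1 p.2 with hg
  have hopen : IsOpen (S ×ˢ {l : ℂ | l ≠ 0}) := hS.prod isOpen_ne
  have hgd : ∀ z ∈ S, ∀ l : ℂ, l ≠ 0 → DifferentiableAt ℝ g (z, l) := fun z hz l hl =>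
    (hsm.contDiffAt (hopen.mem_nhds (Set.mk_mem_prod hz hl))).differentiableAt (by simp)
  have hg1 : ∀ z ∈ S, fderiv ℂ (Fh z) l₀ 1 = fderiv ℝ g (z, l₀) (0, 1) := by
    intro z hz
    have h1 : HasFDerivAt (fun l => g (z, l)) ((fderiv ℝ g (z, l₀)).comp
        (ContinuousLinearMap.inr ℝ ℂ ℂ)) l₀ :=
      (hgd z hz l₀ hl).hasFDerivAt.comp l₀ (hasFDerivAt_prodMk_right z l₀)
    have h2 : HasFDerivAt (Fh z) ((fderiv ℂ (Fh z) l₀).restrictScalars ℝ) l₀ :=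
      (((hhol z hz).differentiableAt (isOpen_ne.mem_nhds hl)).hasFDerivAt).restrictScalars ℝ
    have h3 := h2.unique h1
    have h4 := congrArg (fun T => T 1) h3
    simpa using h4
  have hg2 : ∀ z ∈ S, ∀ l : ℂ, l ≠ 0 → ∀ v, fderiv ℝ (fun w => Fh w l) z v
      = fderiv ℝ g (z, l) (v, 0) := by
    intro z hz l hl v
    have h1 : HasFDerivAt (fun w => g (w, l)) ((fderiv ℝ g (z, l)).comp
        (ContinuousLinearMap.inl ℝ ℂ ℂ)) z :=
      (hgd z hz l hl).hasFDerivAt.comp (f := fun w : ℂ => (w, l)) z (hasFDerivAt_prodMk_left z l)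
    have h3 := congrArg (fun T => T v) h1.fderiv
    simpa using h3
  have hmk : ContDiffOn ℝ (⊤ : ℕ∞) (fun z : ℂ => (z, l₀)) S :=
    contDiffOn_id.prodMk contDiffOn_const
  have hmaps : Set.MapsTo (fun z : ℂ => (z, l₀)) S (S ×ˢ {l : ℂ | l ≠ 0}) :=
    fun z hz => ⟨hz, hl⟩
  have hg' : ContDiffOn ℝ (⊤ : ℕ∞) (fderiv ℝ g) (S ×ˢ {l : ℂ | l ≠ 0}) :=
    hsm.fderiv_of_isOpen hopen (by simp)
  refine ⟨?_, hsm.comp hmk hmaps, ?_⟩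
  · have h : ContDiffOn ℝ (⊤ : ℕ∞) (fun z => fderiv ℝ g (z, l₀) (0, 1)) S :=
      (hg'.comp hmk hmaps).clm_apply contDiffOn_const
    exact h.congr hg1
  · intro z hz v W W' hW hv
    have hca : ContDiffAt ℝ (⊤ : ℕ∞) g (z, l₀) := hsm.contDiffAt (hopen.mem_nhds (Set.mk_mem_prod hz hl))
    have hsym := hca.isSymmSndFDerivAt (by simpa using (WithTop.coe_le_coe.2 le_top : ((2 : ℕ∞) : WithTop ℕ∞) ≤ ((⊤ : ℕ∞) : WithTop ℕ∞)))
    have hd : DifferentiableAt ℝ (fderiv ℝ g) (z, l₀) :=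
      (hg'.contDiffAt (hopen.mem_nhds (Set.mk_mem_prod hz hl))).differentiableAt (by simp)
    have e1 : (fun w => fderiv ℂ (Fh w) l₀ 1) =ᶠ[𝓝 z] fun w => fderiv ℝ g (w, l₀) (0, 1) := by
      filter_upwards [hS.mem_nhds hz] with w hw using hg1 w hw
    rw [e1.fderiv_eq]
    have h1 : HasFDerivAt (fun w => fderiv ℝ g (w, l₀)) ((fderiv ℝ (fderiv ℝ g) (z, l₀)).comp
        (ContinuousLinearMap.inl ℝ ℂ ℂ)) z :=
      hd.hasFDerivAt.comp (f := fun w : ℂ => (w, l₀)) z (hasFDerivAt_prodMk_left z l₀)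
    have h2 := (h1.clm_apply (hasFDerivAt_const ((0 : ℂ), (1 : ℂ)) z)).fderiv
    have h3 := congrArg (fun T => T v) h2
    simp at h3
    rw [h3, hsym.eq]
    have k1 : HasFDerivAt (fun l => fderiv ℝ g (z, l)) ((fderiv ℝ (fderiv ℝ g) (z, l₀)).comp
        (ContinuousLinearMap.inr ℝ ℂ ℂ)) l₀ :=
      hd.hasFDerivAt.comp l₀ (hasFDerivAt_prodMk_right z l₀)
    have k2 := (k1.clm_apply (hasFDerivAt_const (v, (0 : ℂ)) l₀))
    have e2 : (fun l => Fh z l * W l) =ᶠ[𝓝 l₀] fun l => fderiv ℝ g (z, l) (v, 0) := by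
      filter_upwards [isOpen_ne.mem_nhds hl] with l hl'
      rw [← hv l hl', hg2 z hz l hl']
    have k3 := k2.congr_of_eventuallyEq e2
    have k4 : HasDerivAt (fun l => Fh z l * W l)
        (fderiv ℂ (Fh z) l₀ 1 * W l₀ + Fh z l₀ * W') l₀ :=
      (((hhol z hz).differentiableAt (isOpen_ne.mem_nhds hl)).hasFDerivAt.hasDerivAt).mul hW
    have k5 := k3.unique (k4.hasFDerivAt.restrictScalars ℝ)
    have k6 := congrArg (fun T => T 1) k5
    simpa using k6

lemma mixed {Fh : ℂ → ℂ → M2} {S : Set ℂ} (hS : IsOpen S)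
    (hsm : ContDiffOn ℝ (⊤ : ℕ∞) (fun p : ℂ × ℂ => Fh p.1 p.2) (S ×ˢ {l : ℂ | l ≠ 0}))
    (hhol : ∀ z ∈ S, DifferentiableOn ℂ (Fh z) {l : ℂ | l ≠ 0})
    {l₀ : ℂ} (hl : l₀ ≠ 0) :
    ContDiffOn ℝ (⊤ : ℕ∞) (fun z => fderiv ℂ (Fh z) l₀ 1) S ∧
    ContDiffOn ℝ (⊤ : ℕ∞) (fun z => Fh z l₀) S ∧
    ∀ z ∈ S, ∀ (v : ℂ) (W : ℂ → M2) (W' : M2), HasDerivAt W W' l₀ →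
      (∀ l, l ≠ 0 → fderiv ℝ (fun w => Fh w l) z v = Fh z l * W l) →
      fderiv ℝ (fun w => fderiv ℂ (Fh w) l₀ 1) z v
        = fderiv ℂ (Fh z) l₀ 1 * W l₀ + Fh z l₀ * W' :=
  mixed_gen hS hsm hhol hl

/-- Conjugate transposition as a continuous real-linear map. -/
def ctL : M2 →L[ℝ] M2 :=
  LinearMap.toContinuousLinearMap
    { toFun := fun M => Mᴴ
      map_add' := by
        intro M N
        simp
      map_smul' := by
        intro c M
        ext i j
        simp }

lemma ctL_apply (M : M2) : ctL M = Mᴴ := rfl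

lemma skew {G : ℂ → M2} {l : ℂ} (hd : DifferentiableAt ℂ G l) (hl : ‖l‖ = 1)
    (hG : ∀ m : ℂ, ‖m‖ = 1 → (G m)ᴴ * G m = 1) :
    ((Complex.I * l) • fderiv ℂ G l 1)ᴴ * G l + (G l)ᴴ * ((Complex.I * l) • fderiv ℂ G l 1) = 0 := by
  have h0 : HasDerivAt (fun t : ℝ => l * Complex.exp (t * Complex.I)) (Complex.I * l) 0 := by
    have h1 : HasDerivAt (fun t : ℂ => l * Complex.exp (t * Complex.I)) (Complex.I * l) ((0 : ℝ) : ℂ) := by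
      have := (((hasDerivAt_id ((0 : ℝ) : ℂ)).mul_const Complex.I).cexp).const_mul l
      simpa [mul_comm] using this
    exact h1.comp_ofReal
  have hGl : HasDerivAt G (fderiv ℂ G l 1) ((fun t : ℝ => l * Complex.exp (t * Complex.I)) 0) := by
    simpa using hd.hasFDerivAt.hasDerivAt
  have hP := hGl.scomp (0 : ℝ) h0
  have hPs : HasDerivAt (fun t : ℝ => ctL (G (l * Complex.exp (t * Complex.I))))
      (ctL ((Complex.I * l) • fderiv ℂ G l 1)) 0 := ctL.hasFDerivAt.comp_hasDerivAt (0 : ℝ) hP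
  have hprod := hPs.mul hP
  have hconst : HasDerivAt (fun _ : ℝ => (1 : M2)) 0 0 := hasDerivAt_const _ _
  have heq : ((fun t : ℝ => ctL (G (l * Complex.exp (t * Complex.I)))) *
      (G ∘ fun t : ℝ => l * Complex.exp (t * Complex.I))) = fun _ : ℝ => (1 : M2) := by
    funext t
    simp only [Pi.mul_apply, Function.comp, ctL_apply]
    apply hG
    rw [norm_mul, hl, Complex.norm_exp_ofReal_mul_I, one_mul]
  rw [heq] at hprod
  have := hprod.unique hconst
  simpa [ctL_apply] using this

/-- Matrix entry as a continuous linear map. -/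
def entL (i j : Fin 2) : M2 →L[ℂ] ℂ :=
  LinearMap.toContinuousLinearMap (Matrix.entryLinearMap ℂ ℂ i j)

lemma entL_apply (i j : Fin 2) (M : M2) : entL i j M = M i j := rfl

open Topology in
lemma trace_zero {G : ℂ → M2} {l : ℂ} (hd : DifferentiableAt ℂ G l)
    (hdet : ∀ᶠ m in 𝓝 l, (G m).det = 1) :
    (fderiv ℂ G l 1 * (G l)⁻¹).trace = 0 := by
  have hG := hd.hasFDerivAt.hasDerivAt
  have he : ∀ i j, HasDerivAt (fun m => G m i j) (fderiv ℂ G l 1 i j) l := fun i j =>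
    (entL i j).hasFDerivAt.comp_hasDerivAt l hG
  have h1 := ((he 0 0).mul (he 1 1)).sub ((he 0 1).mul (he 1 0))
  have h2 : (fun _ => (1 : ℂ)) =ᶠ[𝓝 l] ((fun m => G m 0 0) * (fun m => G m 1 1) - (fun m => G m 0 1) * (fun m => G m 1 0)) := by
    filter_upwards [hdet] with m hm
    rw [Matrix.det_fin_two] at hm
    simp [hm]
  have h3 := (h1.congr_of_eventuallyEq h2).unique (hasDerivAt_const l (1 : ℂ))
  rw [inv_eq_adjL hdet.self_of_nhds, adjL_apply, Matrix.trace_fin_two]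
  simp only [Matrix.mul_apply, Fin.sum_univ_two]
  simp
  linear_combination h3

lemma px_eq (f : ℂ → M2) (z : ℂ) : px f z = dz f z + dzb f z := by
  simp only [dz, dzb]; module

lemma py_eq (f : ℂ → M2) (z : ℂ) : py f z = Complex.I • (dz f z - dzb f z) := by
  simp only [dz, dzb, smul_sub, smul_add, smul_smul]
  rw [show Complex.I * ((2:ℂ)⁻¹ * Complex.I) = -(2:ℂ)⁻¹ by
    linear_combination (2:ℂ)⁻¹ * Complex.I_mul_I]
  module

lemma ip_conj {F X Y : M2} (h : F.det = 1) : ip (F * X * F⁻¹) (F * Y * F⁻¹) = ip X Y := by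
  unfold ip
  congr 1
  have : F * X * F⁻¹ * (F * Y * F⁻¹) = F * (X * Y) * F⁻¹ := by
    calc _ = F * X * (F⁻¹ * F) * Y * F⁻¹ := by noncomm_ring
      _ = _ := by rw [inv_mul_one' h]; noncomm_ring
  rw [this, Matrix.trace_mul_comm, ← mul_assoc, inv_mul_one' h, one_mul]

lemma hasDerivAt_W_gen {E : Type*} [NormedAddCommGroup E] [NormedSpace ℂ E] (C0 C1 C2 : E)
    {l : ℂ} (hl : l ≠ 0) :
    HasDerivAt (fun m : ℂ => C0 + m⁻¹ • C1 + m • C2) (-(l ^ 2)⁻¹ • C1 + C2) l := by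
  have h := (((hasDerivAt_inv hl).smul_const C1).const_add C0).add ((hasDerivAt_id l).smul_const C2)
  simp only [id, one_smul] at h
  exact h

lemma hasDerivAt_W (C0 C1 C2 : M2) {l : ℂ} (hl : l ≠ 0) :
    HasDerivAt (fun m : ℂ => C0 + m⁻¹ • C1 + m • C2) (-(l ^ 2)⁻¹ • C1 + C2) l :=
  hasDerivAt_W_gen C0 C1 C2 hl

lemma fderiv_csmul {A : ℂ → M2} {z : ℂ} (v c : ℂ) (hA : DifferentiableAt ℝ A z) :
    fderiv ℝ (fun w => c • A w) z v = c • fderiv ℝ A z v := by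
  have h := fderiv_mul_apply (A := fun _ => c • (1 : M2)) v (differentiableAt_const _) hA
  simpa using h

lemma diff_csmul {A : ℂ → M2} {z : ℂ} (c : ℂ) (hA : DifferentiableAt ℝ A z) :
    DifferentiableAt ℝ (fun w => c • A w) z := by
  have h : DifferentiableAt ℝ (fun w => (c • (1 : M2)) * A w) z :=
    (differentiableAt_const (𝕜 := ℝ) (E := ℂ) (x := z) (c • (1 : M2))).mul hA
  have h2 : (fun w => (c • (1 : M2)) * A w) = fun w => c • A w := by
    funext w
    simp
  rw [h2] at h
  exact h

lemma fderiv_cadd {A : ℂ → M2} {z : ℂ} (v : ℂ) (c : M2) :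
    fderiv ℝ (fun w => c + A w) z v = fderiv ℝ A z v :=
  congrArg (fun T => T v) (fderiv_const_add (𝕜 := ℝ) (f := A) (x := z) c)

open Topology in
lemma sym_deriv {H : ℝ} {Fh : ℂ → ℂ → M2} {l₀ z v : ℂ} {W W' : M2}
    (hF : DifferentiableAt ℝ (fun w => Fh w l₀) z)
    (hD : DifferentiableAt ℝ (fun w => fderiv ℂ (Fh w) l₀ 1) z)
    (hdet : ∀ᶠ w in 𝓝 z, (Fh w l₀).det = 1)
    (hW : fderiv ℝ (fun w => Fh w l₀) z v = Fh z l₀ * W)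
    (hW' : fderiv ℝ (fun w => fderiv ℂ (Fh w) l₀ 1) z v
        = fderiv ℂ (Fh z) l₀ 1 * W + Fh z l₀ * W') :
    fderiv ℝ (fun w => symB H (Fh w) l₀) z v
      = Fh z l₀ * ((-(2 * (H : ℂ))⁻¹) • (W * e3 - e3 * W + (2 * Complex.I * l₀) • W'))
        * (Fh z l₀)⁻¹ := by
  set c : ℂ := -(2 * (H : ℂ))⁻¹
  set d : ℂ := 2 * Complex.I * l₀
  have hd0 := hdet.self_of_nhds
  have e : (fun w => symB H (Fh w) l₀) =ᶠ[𝓝 z] fun w => Fh w l₀ *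
      (c • (e3 + d • ((Fh w l₀)⁻¹ * fderiv ℂ (Fh w) l₀ 1))) * (Fh w l₀)⁻¹ := by
    filter_upwards [hdet] with w hw
    simp only [symB, mul_smul_comm, smul_mul_assoc, mul_add, add_mul]
    rw [← mul_assoc (Fh w l₀) (Fh w l₀)⁻¹, mul_inv_one hw, one_mul]
  have hi := diff_inv hF hdet
  have hm : DifferentiableAt ℝ (fun w => (Fh w l₀)⁻¹ * fderiv ℂ (Fh w) l₀ 1) z := hi.mul hD
  have hs : DifferentiableAt ℝ (fun w => e3 + d • ((Fh w l₀)⁻¹ * fderiv ℂ (Fh w) l₀ 1)) z :=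
    (differentiableAt_const e3).add (diff_csmul d hm)
  have hN := diff_csmul c hs
  rw [e.fderiv_eq, conj_deriv hF hN hdet hW, fderiv_csmul v c hs, fderiv_cadd,
    fderiv_csmul v d hm, fderiv_mul_apply v hi hD, fderiv_minv hF hdet hW, hW']
  congr 2
  have : (Fh z l₀)⁻¹ * (fderiv ℂ (Fh z) l₀ 1 * W + Fh z l₀ * W')
      = (Fh z l₀)⁻¹ * fderiv ℂ (Fh z) l₀ 1 * W + W' := by
    rw [mul_add, ← mul_assoc, ← mul_assoc, inv_mul_one' hd0, one_mul]
  rw [this]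
  simp only [mul_smul_comm, smul_mul_assoc, mul_add, add_mul, neg_mul, mul_assoc]
  module

lemma exp_smul_deriv {u : ℂ → ℝ} {z : ℂ} (hu : DifferentiableAt ℝ u z) (K : M2) (v : ℂ) :
    DifferentiableAt ℝ (fun w => (Real.exp (u w) : ℂ) • K) z ∧
    ∃ e : ℂ, fderiv ℝ (fun w => (Real.exp (u w) : ℂ) • K) z v = e • K := by
  have h1 : (fun w => (Real.exp (u w) : ℂ) • K) = fun w => Real.exp (u w) • K := by
    funext w
    ext i j
    simp
  have h2 := hu.exp.hasFDerivAt.smul_const K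
  rw [h1]
  refine ⟨h2.differentiableAt, ((fderiv ℝ (fun w => Real.exp (u w)) z v : ℝ) : ℂ), ?_⟩
  have h3 : fderiv ℝ (fun w => Real.exp (u w) • K) z v
      = (fderiv ℝ (fun w => Real.exp (u w)) z v) • K :=
    congrArg (fun T => T v) h2.fderiv
  rw [h3]
  ext i j
  simp

lemma skew_conj {F X : M2} (hF : Fᴴ * F = 1) (hX : Xᴴ = -X) :
    (F * X * F⁻¹)ᴴ = -(F * X * F⁻¹) := by
  have hi : F⁻¹ = Fᴴ := Matrix.inv_eq_left_inv hF
  rw [hi]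
  simp [Matrix.conjTranspose_mul, hX, mul_assoc]

lemma sym_su {H : ℝ} {G : ℂ → M2} {l : ℂ} (hd : DifferentiableOn ℂ G {l : ℂ | l ≠ 0})
    (hdet : ∀ l : ℂ, l ≠ 0 → (G l).det = 1)
    (hl : ‖l‖ = 1) (hG : ∀ m : ℂ, ‖m‖ = 1 → (G m)ᴴ * G m = 1) :
    (symB H G l)ᴴ = -(symB H G l) ∧ (symB H G l).trace = 0 := by
  have hl0 : l ≠ 0 := by
    rintro rfl
    simp at hl
  have hda : DifferentiableAt ℂ G l := hd.differentiableAt (isOpen_ne.mem_nhds hl0)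
  have hev : ∀ᶠ m in nhds l, (G m).det = 1 := by
    filter_upwards [isOpen_ne.mem_nhds hl0] with m hm using hdet m hm
  have hsk := skew hda hl hG
  have htr := trace_zero hda hev
  have hdl := hdet l hl0
  set D := fderiv ℂ G l 1
  set X := (Complex.I * l) • D with hX
  have he3 : e3ᴴ = -e3 := by
    ext i j
    fin_cases i <;> fin_cases j <;> simp [e3]
  have h1 := skew_conj (hG l hl) he3
  have hi : (G l)⁻¹ = (G l)ᴴ := Matrix.inv_eq_left_inv (hG l hl)
  have hXF : (X * (G l)⁻¹)ᴴ = -(X * (G l)⁻¹) := by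
    have h2 : Xᴴ * G l = -((G l)ᴴ * X) := eq_neg_of_add_eq_zero_left hsk
    have h3 : Xᴴ = -((G l)ᴴ * X * (G l)⁻¹) := by
      calc Xᴴ = Xᴴ * (G l * (G l)⁻¹) := by rw [mul_inv_one hdl, mul_one]
        _ = _ := by rw [← mul_assoc, h2, neg_mul]
    have h4 : ((G l)⁻¹)ᴴ = G l := by rw [hi, Matrix.conjTranspose_conjTranspose]
    rw [Matrix.conjTranspose_mul, h4, h3, ← hi, mul_neg, ← mul_assoc, ← mul_assoc,
      mul_inv_one hdl, one_mul]
  have hform : symB H G l = (((-(2 * H)⁻¹ : ℝ)) : ℂ) • (G l * e3 * (G l)⁻¹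
      + (2 : ℂ) • (X * (G l)⁻¹)) := by
    simp only [symB, hX, smul_mul_assoc, smul_smul]
    push_cast
    congr 3
    ring
  constructor
  · rw [hform, Matrix.conjTranspose_smul, Matrix.conjTranspose_add, Matrix.conjTranspose_smul, h1,
      hXF]
    simp only [Complex.star_def, Complex.conj_ofReal, map_ofNat]
    module
  · rw [hform, hX, Matrix.trace_smul, Matrix.trace_add, Matrix.trace_smul, smul_mul_assoc,
      Matrix.trace_smul, htr, Matrix.trace_mul_comm, ← mul_assoc, inv_mul_one' hdl, one_mul]
    simp [e3, Matrix.trace_fin_two]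

lemma contDiff_inv {F : ℂ → M2} {S : Set ℂ} (hF : ContDiffOn ℝ (⊤ : ℕ∞) F S)
    (hdet : ∀ z ∈ S, (F z).det = 1) : ContDiffOn ℝ (⊤ : ℕ∞) (fun z => (F z)⁻¹) S := by
  have h : ContDiffOn ℝ (⊤ : ℕ∞) (fun z => adjL (F z)) S :=
    adjL.contDiff.comp_contDiffOn hF
  exact h.congr fun z hz => inv_eq_adjL (hdet z hz)

lemma sym_smooth {H : ℝ} {Fh : ℂ → ℂ → M2} {l₀ : ℂ} {S : Set ℂ}
    (hF : ContDiffOn ℝ (⊤ : ℕ∞) (fun z => Fh z l₀) S)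
    (hD : ContDiffOn ℝ (⊤ : ℕ∞) (fun z => fderiv ℂ (Fh z) l₀ 1) S)
    (hdet : ∀ z ∈ S, (Fh z l₀).det = 1) :
    ContDiffOn ℝ (⊤ : ℕ∞) (fun z => symB H (Fh z) l₀) S := by
  have hi := contDiff_inv hF hdet
  have h : ContDiffOn ℝ (⊤ : ℕ∞) (fun z => ((-(2 * (H : ℂ))⁻¹) • (1 : M2)) *
      (Fh z l₀ * e3 * (Fh z l₀)⁻¹ + ((2 * Complex.I * l₀) • (1 : M2)) *
        (fderiv ℂ (Fh z) l₀ 1 * (Fh z l₀)⁻¹))) S :=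
    contDiffOn_const.mul (((hF.mul contDiffOn_const).mul hi).add
      (contDiffOn_const.mul (hD.mul hi)))
  refine h.congr fun z hz => ?_
  simp only [symB, smul_mul_assoc, one_mul]

/-- given a map `F̂` with Maurer–Cartan form of extended-frame type, for each
`λ₀` on the unit circle the Sym–Bobenko formula produces a conformal immersion with
conformal factor `e^u`, constant mean curvature `H` and Hopf coefficient `λ₀⁻² Q`. -/
theorem sym_bobenko_produces_cmc
    (S : Set ℂ) (hS : IsOpen S)
    (H : ℝ) (hH0 : H ≠ 0)
    (u : ℂ → ℝ) (Q : ℂ → ℂ)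
    (hu : ContDiffOn ℝ (⊤ : ℕ∞) u S)
    (hQ : ContDiffOn ℝ (⊤ : ℕ∞) Q S)
    (Fh : ℂ → ℂ → M2)
    (hFhsm : ContDiffOn ℝ (⊤ : ℕ∞) (fun p : ℂ × ℂ => Fh p.1 p.2) (S ×ˢ {l : ℂ | l ≠ 0}))
    (hFhhol : ∀ z ∈ S, DifferentiableOn ℂ (Fh z) {l : ℂ | l ≠ 0})
    (hFhdet : ∀ z ∈ S, ∀ l : ℂ, l ≠ 0 → (Fh z l).det = 1)
    (hFhunit : ∀ z ∈ S, ∀ l : ℂ, ‖l‖ = 1 → (Fh z l)ᴴ * Fh z l = 1)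
    (hMCz : ∀ z ∈ S, ∀ l : ℂ, l ≠ 0 →
      (Fh z l)⁻¹ * dz (fun w => Fh w l) z = (2:ℂ)⁻¹ •
        !![dzR u z, -2 * (H : ℂ) * (Real.exp (u z) : ℂ) * l⁻¹;
           Q z * (Real.exp (-(u z)) : ℂ) * l⁻¹, -(dzR u z)])
    (hMCzb : ∀ z ∈ S, ∀ l : ℂ, l ≠ 0 →
      (Fh z l)⁻¹ * dzb (fun w => Fh w l) z = (2:ℂ)⁻¹ •
        !![-(dzbR u z), -((starRingEnd ℂ) (Q z)) * (Real.exp (-(u z)) : ℂ) * l;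
           2 * (H : ℂ) * (Real.exp (u z) : ℂ) * l, dzbR u z]) :
    ∀ l₀ : ℂ, ‖l₀‖ = 1 →
      ContDiffOn ℝ (⊤ : ℕ∞) (fun z => symB H (Fh z) l₀) S ∧
      (∀ z ∈ S, ((symB H (Fh z) l₀)ᴴ = -(symB H (Fh z) l₀) ∧ (symB H (Fh z) l₀).trace = 0)) ∧
      (∀ z ∈ S,
        ip (px (fun w => symB H (Fh w) l₀) z) (px (fun w => symB H (Fh w) l₀) z)
          = ((4 * Real.exp (2 * u z) : ℝ) : ℂ) ∧
        ip (py (fun w => symB H (Fh w) l₀) z) (py (fun w => symB H (Fh w) l₀) z)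
          = ((4 * Real.exp (2 * u z) : ℝ) : ℂ) ∧
        ip (px (fun w => symB H (Fh w) l₀) z) (py (fun w => symB H (Fh w) l₀) z) = 0) ∧
      ∃ F : ℂ → M2, ContDiffOn ℝ (⊤ : ℕ∞) F S ∧
        ∀ z ∈ S, (F z)ᴴ * F z = 1 ∧ (F z).det = 1 ∧
          F z * e1 * (F z)⁻¹
            = (((2 * Real.exp (u z))⁻¹ : ℝ) : ℂ) • px (fun w => symB H (Fh w) l₀) z ∧
          F z * e2 * (F z)⁻¹
            = (((2 * Real.exp (u z))⁻¹ : ℝ) : ℂ) • py (fun w => symB H (Fh w) l₀) z ∧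
          ip (px (px (fun w => symB H (Fh w) l₀)) z + py (py (fun w => symB H (Fh w) l₀)) z)
              (F z * e3 * (F z)⁻¹)
            = ((8 * Real.exp (2 * u z) * H : ℝ) : ℂ) ∧
          ip (F z * e3 * (F z)⁻¹) (dz (dz (fun w => symB H (Fh w) l₀)) z)
            = l₀⁻¹ ^ 2 * Q z := by
  intro l₀ hl
  have hl0 : l₀ ≠ 0 := by
    rintro rfl
    simp at hl
  have hHc : (H : ℂ) ≠ 0 := by exact_mod_cast hH0
  obtain ⟨hDsm, hFsm, hmix⟩ := mixed hS hFhsm hFhhol hl0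
  have hdet0 : ∀ z ∈ S, (Fh z l₀).det = 1 := fun z hz => hFhdet z hz l₀ hl0
  have hFd : ∀ z ∈ S, DifferentiableAt ℝ (fun w => Fh w l₀) z := fun z hz =>
    (hFsm.contDiffAt (hS.mem_nhds hz)).differentiableAt (by simp)
  have hDd : ∀ z ∈ S, DifferentiableAt ℝ (fun w => fderiv ℂ (Fh w) l₀ 1) z := fun z hz =>
    (hDsm.contDiffAt (hS.mem_nhds hz)).differentiableAt (by simp)
  have hud : ∀ z ∈ S, DifferentiableAt ℝ u z := fun z hz =>
    (hu.contDiffAt (hS.mem_nhds hz)).differentiableAt (by simp)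
  have hev : ∀ z ∈ S, ∀ᶠ w in nhds z, (Fh w l₀).det = 1 := fun z hz => by
    filter_upwards [hS.mem_nhds hz] with w hw using hdet0 w hw
  -- coefficient matrices of the Maurer-Cartan form
  let P : ℂ → M2 := fun z => (2:ℂ)⁻¹ • !![dzR u z, 0; 0, -(dzR u z)]
  let A : ℂ → M2 := fun z => (2:ℂ)⁻¹ • !![0, -2 * (H : ℂ) * (Real.exp (u z) : ℂ);
    Q z * (Real.exp (-(u z)) : ℂ), 0]
  let R : ℂ → M2 := fun z => (2:ℂ)⁻¹ • !![-(dzbR u z), 0; 0, dzbR u z]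
  let B : ℂ → M2 := fun z => (2:ℂ)⁻¹ • !![0, -((starRingEnd ℂ) (Q z)) * (Real.exp (-(u z)) : ℂ);
    2 * (H : ℂ) * (Real.exp (u z) : ℂ), 0]
  have hz1 : ∀ z ∈ S, ∀ l : ℂ, l ≠ 0 →
      dz (fun w => Fh w l) z = Fh z l * (P z + l⁻¹ • A z) := by
    intro z hz l hl
    have h := congrArg (fun M => Fh z l * M) (hMCz z hz l hl)
    simp only [← mul_assoc, mul_inv_one (hFhdet z hz l hl), one_mul] at h
    rw [h]
    congr 1
    ext i j
    fin_cases i <;> fin_cases j <;> simp [P, A] <;> ring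
  have hz2 : ∀ z ∈ S, ∀ l : ℂ, l ≠ 0 →
      dzb (fun w => Fh w l) z = Fh z l * (R z + l • B z) := by
    intro z hz l hl
    have h := congrArg (fun M => Fh z l * M) (hMCzb z hz l hl)
    simp only [← mul_assoc, mul_inv_one (hFhdet z hz l hl), one_mul] at h
    rw [h]
    congr 1
    ext i j
    fin_cases i <;> fin_cases j <;> simp [R, B] <;> ring
  let W1 : ℂ → ℂ → M2 := fun z l => (P z + R z) + l⁻¹ • A z + l • B z
  let WI : ℂ → ℂ → M2 := fun z l =>
    Complex.I • (P z - R z) + l⁻¹ • (Complex.I • A z) + l • (-Complex.I • B z)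
  have hw1 : ∀ z ∈ S, ∀ l : ℂ, l ≠ 0 →
      fderiv ℝ (fun w => Fh w l) z 1 = Fh z l * W1 z l := by
    intro z hz l hl
    have h := px_eq (fun w => Fh w l) z
    rw [hz1 z hz l hl, hz2 z hz l hl, ← mul_add] at h
    refine (show _ = _ from h).trans ?_
    congr 1
    simp only [W1]
    module
  have hwI : ∀ z ∈ S, ∀ l : ℂ, l ≠ 0 →
      fderiv ℝ (fun w => Fh w l) z Complex.I = Fh z l * WI z l := by
    intro z hz l hl
    have h := py_eq (fun w => Fh w l) z
    rw [hz1 z hz l hl, hz2 z hz l hl, ← mul_sub, ← mul_smul_comm] at h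
    refine (show _ = _ from h).trans ?_
    congr 1
    simp only [WI]
    module
  let K1 : M2 := !![0, -2 * Complex.I * l₀⁻¹; -2 * Complex.I * l₀, 0]
  let KI : M2 := !![0, 2 * l₀⁻¹; -2 * l₀, 0]
  let Kz : M2 := !![0, -2 * Complex.I * l₀⁻¹; 0, 0]
  have hI2 : Complex.I ^ 2 = -1 := Complex.I_sq
  have hpx : ∀ z ∈ S, px (fun w => symB H (Fh w) l₀) z
      = Fh z l₀ * ((Real.exp (u z) : ℂ) • K1) * (Fh z l₀)⁻¹ := by
    intro z hz
    have hder := hasDerivAt_W (P z + R z) (A z) (B z) hl0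
    refine (sym_deriv (hFd z hz) (hDd z hz) (hev z hz) (hw1 z hz l₀ hl0)
      (hmix z hz 1 (W1 z) _ hder (hw1 z hz))).trans ?_
    congr 2
    ext i j
    fin_cases i <;> fin_cases j <;>
      simp [hH0, W1, P, A, R, B, K1, e3, Matrix.mul_apply, Fin.sum_univ_two] <;> field_simp <;> try ring
  have hpy : ∀ z ∈ S, py (fun w => symB H (Fh w) l₀) z
      = Fh z l₀ * ((Real.exp (u z) : ℂ) • KI) * (Fh z l₀)⁻¹ := by
    intro z hz
    have hder := hasDerivAt_W (Complex.I • (P z - R z)) (Complex.I • A z) (-Complex.I • B z) hl0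
    refine (sym_deriv (hFd z hz) (hDd z hz) (hev z hz) (hwI z hz l₀ hl0)
      (hmix z hz Complex.I (WI z) _ hder (hwI z hz))).trans ?_
    congr 2
    ext i j
    fin_cases i <;> fin_cases j <;>
      simp [hH0, WI, P, A, R, B, KI, e3, Matrix.mul_apply, Fin.sum_univ_two] <;> field_simp <;>
      ring_nf <;> (try simp only [hI2]) <;> try ring
  have hdzf : ∀ z ∈ S, dz (fun w => symB H (Fh w) l₀) z
      = Fh z l₀ * ((Real.exp (u z) : ℂ) • Kz) * (Fh z l₀)⁻¹ := by
    intro z hz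
    rw [dz, hpx z hz, hpy z hz]
    have : (Real.exp (u z) : ℂ) • Kz = (2:ℂ)⁻¹ • ((Real.exp (u z) : ℂ) • K1
        - Complex.I • ((Real.exp (u z) : ℂ) • KI)) := by
      ext i j
      fin_cases i <;> fin_cases j <;> simp [Kz, K1, KI] <;> ring
    rw [this]
    simp only [mul_smul_comm, smul_mul_assoc, mul_sub, sub_mul]
  -- second derivatives
  have hsec : ∀ (g : ℂ → M2) (K : M2), (∀ z ∈ S, g z
      = Fh z l₀ * ((Real.exp (u z) : ℂ) • K) * (Fh z l₀)⁻¹) → ∀ z ∈ S,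
      (∃ e : ℂ, px g z = Fh z l₀ * (W1 z l₀ * ((Real.exp (u z) : ℂ) • K)
        - ((Real.exp (u z) : ℂ) • K) * W1 z l₀ + e • K) * (Fh z l₀)⁻¹) ∧
      (∃ e : ℂ, py g z = Fh z l₀ * (WI z l₀ * ((Real.exp (u z) : ℂ) • K)
        - ((Real.exp (u z) : ℂ) • K) * WI z l₀ + e • K) * (Fh z l₀)⁻¹) := by
    intro g K hg z hz
    have he : g =ᶠ[nhds z] fun w => Fh w l₀ * ((Real.exp (u w) : ℂ) • K) * (Fh w l₀)⁻¹ := by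
      filter_upwards [hS.mem_nhds hz] with w hw using hg w hw
    obtain ⟨hd1, a, ha⟩ := exp_smul_deriv (hud z hz) K 1
    obtain ⟨_, b, hb⟩ := exp_smul_deriv (hud z hz) K Complex.I
    refine ⟨⟨a, ?_⟩, ⟨b, ?_⟩⟩
    · rw [px, he.fderiv_eq, conj_deriv (hFd z hz) hd1 (hev z hz) (hw1 z hz l₀ hl0), ha]
    · rw [py, he.fderiv_eq, conj_deriv (hFd z hz) hd1 (hev z hz) (hwI z hz l₀ hl0), hb]
  have hexp2 : ∀ z, ((Real.exp (2 * u z) : ℝ) : ℂ) = (Real.exp (u z) : ℂ) ^ 2 := by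
    intro z
    rw [two_mul, Real.exp_add]
    push_cast
    ring
  have hexpn : ∀ z, (Real.exp (-(u z)) : ℂ) = (Real.exp (u z) : ℂ)⁻¹ := by
    intro z
    rw [Real.exp_neg]
    push_cast
    rfl
  have hexp0 : ∀ z, (Real.exp (u z) : ℂ) ≠ 0 := fun z => by
    exact_mod_cast (Real.exp_pos (u z)).ne'
  refine ⟨sym_smooth hFsm hDsm hdet0, fun z hz => sym_su (hFhhol z hz) (hFhdet z hz) hl
    (hFhunit z hz), ?_, ?_⟩
  · intro z hz
    rw [hpx z hz, hpy z hz, ip_conj (hdet0 z hz), ip_conj (hdet0 z hz), ip_conj (hdet0 z hz)]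
    rw [Complex.ofReal_mul, hexp2]
    generalize (Real.exp (u z) : ℂ) = E
    refine ⟨?_, ?_, ?_⟩ <;>
      simp [ip, K1, KI, Matrix.trace_fin_two, Matrix.mul_apply, Fin.sum_univ_two] <;>
      field_simp <;> ring_nf <;> simp only [hI2] <;> ring
  · obtain ⟨s, hs⟩ : ∃ s : ℂ, s ^ 2 = l₀⁻¹ := IsAlgClosed.exists_pow_nat_eq _ (by norm_num)
    have hs0 : s ≠ 0 := by
      rintro rfl
      exact inv_ne_zero hl0 (by rw [← hs]; simp)
    have hsn : ‖s‖ = 1 := by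
      have h := congrArg norm hs
      rw [norm_pow, norm_inv, hl, inv_one] at h
      exact (pow_eq_one_iff_of_nonneg (norm_nonneg s) (by norm_num)).1 h
    have hsc : (starRingEnd ℂ) s * s = 1 := by
      rw [Complex.conj_mul', hsn]
      simp
    have hl' : l₀ = (s ^ 2)⁻¹ := by rw [hs, inv_inv]
    let T : M2 := !![s, 0; 0, s⁻¹]
    have hTdet : T.det = 1 := by simp [T, Matrix.det_fin_two, hs0]
    have hTi : T⁻¹ = !![s⁻¹, 0; 0, s] := by
      rw [inv_eq_adjL hTdet, adjL_apply]
      simp [T]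
    have hTu : Tᴴ * T = 1 := by
      have : (starRingEnd ℂ) s⁻¹ * s⁻¹ = 1 := by
        rw [map_inv₀, ← mul_inv, hsc, inv_one]
      ext i j
      fin_cases i <;> fin_cases j <;>
        simp [T, Matrix.mul_apply, Fin.sum_univ_two, hsc]
      simpa using this
    have hconj : ∀ z X, Fh z l₀ * T * X * (Fh z l₀ * T)⁻¹
        = Fh z l₀ * (T * X * T⁻¹) * (Fh z l₀)⁻¹ := by
      intro z X
      rw [Matrix.mul_inv_rev]
      simp only [mul_assoc]
    have hT3 : T * e3 * T⁻¹ = e3 := by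
      rw [hTi]
      ext i j
      fin_cases i <;> fin_cases j <;>
        simp [T, e3, Matrix.mul_apply, Fin.sum_univ_two] <;> field_simp
    refine ⟨fun z => Fh z l₀ * T, hFsm.mul contDiffOn_const, fun z hz => ⟨?_, ?_, ?_, ?_, ?_, ?_⟩⟩
    · rw [Matrix.conjTranspose_mul]
      calc _ = Tᴴ * ((Fh z l₀)ᴴ * Fh z l₀) * T := by simp only [mul_assoc]
        _ = 1 := by rw [hFhunit z hz l₀ hl, mul_one, hTu]
    · rw [Matrix.det_mul, hdet0 z hz, hTdet, one_mul]
    · rw [hconj, hpx z hz, ← smul_mul_assoc, ← mul_smul_comm, hTi]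
      congr 2
      have hE := hexp0 z
      push_cast at hE ⊢
      ext i j
      fin_cases i <;> fin_cases j <;>
        simp [T, e1, K1, hl', Matrix.mul_apply, Fin.sum_univ_two] <;> field_simp
    · rw [hconj, hpy z hz, ← smul_mul_assoc, ← mul_smul_comm, hTi]
      congr 2
      have hE := hexp0 z
      push_cast at hE ⊢
      ext i j
      fin_cases i <;> fin_cases j <;>
        simp [T, e2, KI, hl', Matrix.mul_apply, Fin.sum_univ_two] <;> field_simp
    · obtain ⟨⟨a, ha⟩, -⟩ := hsec _ K1 hpx z hz
      obtain ⟨-, ⟨b, hb⟩⟩ := hsec _ KI hpy z hz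
      rw [ha, hb, ← add_mul, ← mul_add, hconj, ip_conj (hdet0 z hz), hT3]
      rw [Complex.ofReal_mul, Complex.ofReal_mul, hexp2]
      have hE := hexp0 z
      simp only [W1, WI, P, A, R, B, hexpn]
      generalize (Real.exp (u z) : ℂ) = E at hE
      simp [ip, K1, KI, e3, Matrix.trace_fin_two, Matrix.mul_apply, Fin.sum_univ_two]
      field_simp
      ring_nf
      have hI4 : Complex.I ^ 4 = 1 := Complex.I_pow_four
      simp only [hI2, hI4]
      ring
    · obtain ⟨⟨a, ha⟩, ⟨b, hb⟩⟩ := hsec _ Kz hdzf z hz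
      rw [dz, ha, hb, ← smul_mul_assoc, ← mul_smul_comm, ← sub_mul, ← mul_sub,
        ← smul_mul_assoc, ← mul_smul_comm, hconj, ip_conj (hdet0 z hz), hT3]
      have hE := hexp0 z
      simp only [W1, WI, P, A, R, B, hexpn]
      generalize (Real.exp (u z) : ℂ) = E at hE
      simp [ip, Kz, e3, Matrix.trace_fin_two, Matrix.mul_apply, Fin.sum_univ_two]
      field_simp
      ring_nf
      have hI4 : Complex.I ^ 4 = 1 := Complex.I_pow_four
      simp only [hI2, hI4]
      ring
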